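/- Let Enc : {0,1}^k → {0,1}^n with k a power of two, write ℓ = log₂ k, let 0 < p ≤ 1 with p·n an integer, and let a = ⌈log₂ L⌉ + 100. Suppose D̄ is an adaptive q-query oracle procedure with query set [n] and input set [k] × [L] such that: with probability at least 0.51 over choosing m uniform in {0,1}^k and ρ ∼ Rest^n_p independently, with probability at least 0.01 over z ∼ U^{1/3}_{p·n}, setting w = Enc(m) ⊕ Fill_ρ(z), there exists j ∈ [L] such that D̄^w(i, j) = m_i for every i ∈ [k]. Then for every α ∈ {0,1}^a there exists a q-CNF C^α over n variables such that C = ⋁_{α ∈ {0,1}^a} C^α satisfies: (1) Pr[C(U_n) = 1] ≤ 2^{−(2^ℓ − a)}; and (2) Pr_{ρ∼Rest^n_p}[ Pr_{z∼U^{1/3}_{p·n}}[C(Fill_ρ(z)) = 1] ≥ 0.01 ] ≥ 0.01. -/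

import Mathlib

open scoped BigOperators

attribute [local instance] Classical.propDecidable

noncomputable section

/-- Probability that a uniformly random element of a finite type satisfies `P`. -/
def uPr {X : Type*} [Fintype X] (P : X → Prop) : ℝ :=
  (Fintype.card {x : X // P x} : ℝ) / (Fintype.card X : ℝ)

/-- Probability of `P` under `t` i.i.d. bits, each equal to `true` with probability `p`. -/
def bPr {t : ℕ} (p : ℝ) (P : (Fin t → Bool) → Prop) : ℝ :=
  ∑ x : Fin t → Bool, if P x then (∏ i, if x i then p else 1 - p) else 0

/-- An adaptive `q`-query oracle procedure with input set `I` and query set `Q`. -/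
structure OracleProc (q : ℕ) (I : Type*) (Q : Type*) where
  qry : (i : Fin q) → I → (Fin i.val → Bool) → Q
  out : I → (Fin q → Bool) → Bool

/-- The answer to the `i`-th query when running with oracle `D` on input `w`. -/
def OracleProc.ans {q : ℕ} {I Q : Type*} (P : OracleProc q I Q) (D : Q → Bool) (w : I)
    (i : Fin q) : Bool :=
  D (P.qry i w (fun j => P.ans D w ⟨j.val, j.isLt.trans i.isLt⟩))
termination_by i.val
decreasing_by exact j.isLt

/-- The output of the oracle procedure, with oracle `D`, on input `w`. -/
def OracleProc.run {q : ℕ} {I Q : Type*} (P : OracleProc q I Q) (D : Q → Bool) (w : I) : Bool :=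
  P.out w (P.ans D w)

/-- A clause over `n` Boolean variables: a list of literals (variable, polarity). -/
abbrev BClause (n : ℕ) := List (Fin n × Bool)

/-- A CNF over `n` Boolean variables: a list of clauses. -/
abbrev BCNF (n : ℕ) := List (BClause n)

def BClause.eval {n : ℕ} (c : BClause n) (x : Fin n → Bool) : Bool :=
  c.any (fun l => x l.1 == l.2)

def BCNF.eval {n : ℕ} (φ : BCNF n) (x : Fin n → Bool) : Bool :=
  φ.all (fun c => BClause.eval c x)

/-- A `q`-CNF: every clause has at most `q` literals. -/
def BCNF.width {n : ℕ} (φ : BCNF n) (q : ℕ) : Prop :=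
  ∀ c ∈ φ, c.length ≤ q

/-- Hamming weight. -/
def wt {n : ℕ} (x : Fin n → Bool) : ℕ :=
  (Finset.univ.filter (fun i => x i = true)).card

/-- The set of free (`*`) positions of a restriction. -/
def freeSet {n : ℕ} (ρ : Fin n → Option Bool) : Finset (Fin n) :=
  Finset.univ.filter (fun i => ρ i = none)

/-- The number of free positions of a restriction. -/
def freeCount {n : ℕ} (ρ : Fin n → Option Bool) : ℕ := (freeSet ρ).card

/-- Fill the free positions of a restriction `ρ` with the bits of `x`, in order. -/
def Fill {n t : ℕ} (ρ : Fin n → Option Bool) (h : freeCount ρ = t)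
    (x : Fin t → Bool) : Fin n → Bool := fun i =>
  if hm : i ∈ freeSet ρ then x (((freeSet ρ).orderIsoOfFin h).symm ⟨i, hm⟩)
  else (ρ i).getD false

/-- The restrictions on `n` variables with exactly `t` free positions. -/
abbrev Restr (n t : ℕ) := {ρ : Fin n → Option Bool // freeCount ρ = t}

/-- Relative Hamming distance. -/
def relDist {n : ℕ} (x y : Fin n → Bool) : ℝ :=
  ((Finset.univ.filter (fun i => x i ≠ y i)).card : ℝ) / n

end
theorem aux_ans {q : ℕ} {I Q : Type*} (P : OracleProc q I Q) (D : Q → Bool) (w : I)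
    (b : Fin q → Bool) :
    (∀ t : Fin q, D (P.qry t w (fun j => b ⟨j.val, j.isLt.trans t.isLt⟩)) = b t) ↔
      P.ans D w = b := by
  constructor
  · intro h
    have key : ∀ N : ℕ, ∀ t : Fin q, t.val = N → P.ans D w t = b t := by
      intro N
      induction N using Nat.strong_induction_on with
      | _ N ih =>
        intro t ht
        rw [OracleProc.ans, ← h t]
        congr 2
        funext j
        exact ih j.val (ht ▸ j.isLt) _ rfl
    funext t
    exact key _ t rfl
  · rintro rfl t
    conv_rhs => rw [OracleProc.ans]

noncomputable def auxClause {q n k L : ℕ} (e : Fin n → Bool) (P : OracleProc q (Fin k × Fin L) (Fin n))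
    (w : Fin k × Fin L) (b : Fin q → Bool) : BClause n :=
  List.ofFn (fun t : Fin q =>
    (P.qry t w (fun j => b ⟨j.val, j.isLt.trans t.isLt⟩),
      !(xor (e (P.qry t w (fun j => b ⟨j.val, j.isLt.trans t.isLt⟩))) (b t))))

theorem aux_clause {q n k L : ℕ} (e : Fin n → Bool) (P : OracleProc q (Fin k × Fin L) (Fin n))
    (w : Fin k × Fin L) (b : Fin q → Bool) (x : Fin n → Bool) :
    BClause.eval (auxClause e P w b) x = true ↔ P.ans (fun s => xor (e s) (x s)) w ≠ b := by
  rw [Ne, ← aux_ans]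
  simp only [BClause.eval, auxClause, List.any_eq_true, List.mem_ofFn, not_forall]
  constructor
  · rintro ⟨_, ⟨t, rfl⟩, h⟩
    refine ⟨t, ?_⟩
    revert h
    dsimp only
    generalize e _ = u
    generalize x _ = v
    generalize b t = y
    revert u v y
    decide
  · rintro ⟨t, h⟩
    refine ⟨_, ⟨t, rfl⟩, ?_⟩
    revert h
    dsimp only
    generalize e _ = u
    generalize x _ = v
    generalize b t = y
    revert u v y
    decide

noncomputable def auxCNF {q n k L : ℕ} (e : Fin n → Bool) (P : OracleProc q (Fin k × Fin L) (Fin n))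
    (m : Fin k → Bool) (j : Fin L) : BCNF n :=
  ((Finset.univ : Finset (Fin k × (Fin q → Bool))).filter
    (fun ib => P.out (ib.1, j) ib.2 ≠ m ib.1)).toList.map
      (fun ib => auxClause e P (ib.1, j) ib.2)

theorem aux_width {q n k L : ℕ} (e : Fin n → Bool) (P : OracleProc q (Fin k × Fin L) (Fin n))
    (m : Fin k → Bool) (j : Fin L) : BCNF.width (auxCNF e P m j) q := by
  intro c hc
  simp only [auxCNF, List.mem_map] at hc
  obtain ⟨ib, _, rfl⟩ := hc
  simp [auxClause]

theorem aux_cnf {q n k L : ℕ} (e : Fin n → Bool) (P : OracleProc q (Fin k × Fin L) (Fin n))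
    (m : Fin k → Bool) (j : Fin L) (x : Fin n → Bool) :
    BCNF.eval (auxCNF e P m j) x = true ↔
      ∀ i, P.run (fun s => xor (e s) (x s)) (i, j) = m i := by
  simp only [BCNF.eval, auxCNF, List.all_eq_true, List.mem_map, Finset.mem_toList,
    Finset.mem_filter, Finset.mem_univ, true_and]
  constructor
  · intro h i
    by_contra hne
    have := h _ ⟨(i, P.ans (fun s => xor (e s) (x s)) (i, j)), hne, rfl⟩
    rw [aux_clause] at this
    exact this rfl
  · rintro h _ ⟨⟨i, b⟩, hne, rfl⟩
    rw [aux_clause]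
    intro hb
    dsimp only at hb hne
    exact hne (hb ▸ h i)

theorem aux_exists {n L a : ℕ} (hLa : L ≤ 2 ^ a) (F : Fin L → BCNF n) (q : ℕ)
    (hF : ∀ j, BCNF.width (F j) q) :
    ∃ C : (Fin a → Bool) → BCNF n, (∀ α, BCNF.width (C α) q) ∧
      ∀ x, (∃ α, BCNF.eval (C α) x = true) ↔ ∃ j, BCNF.eval (F j) x = true := by
  have hc : Fintype.card (Fin L) ≤ Fintype.card (Fin a → Bool) := by simpa using hLa
  obtain ⟨f⟩ := Function.Embedding.nonempty_of_card_le hc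
  refine ⟨fun α => if h : ∃ j, f j = α then F h.choose else [[]], ?_, ?_⟩
  · intro α
    dsimp only
    split_ifs with h
    · exact hF _
    · intro c hc
      simp at hc
      simp [hc]
  · intro x
    constructor
    · rintro ⟨α, h⟩
      dsimp only at h
      split_ifs at h with h'
      · exact ⟨_, h⟩
      · simp [BCNF.eval, BClause.eval] at h
    · rintro ⟨j, h⟩
      refine ⟨f j, ?_⟩
      have h' : ∃ j', f j' = f j := ⟨j, rfl⟩
      dsimp only
      rw [dif_pos h', f.injective h'.choose_spec]
      exact h

theorem aux_uPr {X : Type*} [Fintype X] (P : X → Prop) :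
    uPr P = (∑ x : X, if P x then (1 : ℝ) else 0) / Fintype.card X := by
  unfold uPr
  rw [Fintype.card_subtype, Finset.sum_boole]

theorem aux_uPr_prod {X Y : Type*} [Fintype X] [Fintype Y] (P : X × Y → Prop) :
    uPr P = (∑ x : X, uPr (fun y => P (x, y))) / Fintype.card X := by
  simp only [aux_uPr, Fintype.sum_prod_type, Fintype.card_prod, ← Finset.sum_div]
  rw [div_div]
  push_cast
  ring

theorem aux_uPr_le_one {X : Type*} [Fintype X] (P : X → Prop) : uPr P ≤ 1 := by
  unfold uPr
  apply div_le_one_of_le₀ _ (Nat.cast_nonneg _)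
  exact_mod_cast Fintype.card_subtype_le P

theorem aux_uPr_nonneg {X : Type*} [Fintype X] (P : X → Prop) : 0 ≤ uPr P := by
  unfold uPr
  positivity

theorem aux_sum {k n L : ℕ} (Enc : (Fin k → Bool) → (Fin n → Bool))
    (r : (Fin n → Bool) → Fin k × Fin L → Bool) :
    ∑ m : Fin k → Bool, uPr (fun x : Fin n → Bool =>
      ∃ j : Fin L, ∀ i, r (fun s => xor (Enc m s) (x s)) (i, j) = m i) ≤ L := by
  have h1 : ∀ m : Fin k → Bool, uPr (fun x : Fin n → Bool =>
      ∃ j : Fin L, ∀ i, r (fun s => xor (Enc m s) (x s)) (i, j) = m i) =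
      (∑ w : Fin n → Bool, if (∃ j : Fin L, ∀ i, r w (i, j) = m i) then (1 : ℝ) else 0) /
        Fintype.card (Fin n → Bool) := by
    intro m
    rw [aux_uPr]
    congr 1
    have hinv : Function.Involutive
        (fun (x : Fin n → Bool) => (fun s => xor (Enc m s) (x s) : Fin n → Bool)) := by
      intro x
      funext s
      simp
    refine Eq.trans ?_ (Equiv.sum_comp hinv.toPerm
      (fun w => if (∃ j : Fin L, ∀ i, r w (i, j) = m i) then (1 : ℝ) else 0))
    refine Finset.sum_congr rfl (fun x _ => ?_)
    simp only [Function.Involutive.coe_toPerm]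
    congr
  simp only [h1]
  rw [← Finset.sum_div, Finset.sum_comm, div_le_iff₀ (by exact_mod_cast Fintype.card_pos)]
  have h2 : ∀ w : Fin n → Bool, (∑ m : Fin k → Bool,
      if (∃ j : Fin L, ∀ i, r w (i, j) = m i) then (1 : ℝ) else 0) ≤ L := by
    intro w
    rw [Finset.sum_boole]
    have hs : (Finset.univ.filter (fun m : Fin k → Bool => ∃ j : Fin L, ∀ i, r w (i, j) = m i)) ⊆
        (Finset.univ : Finset (Fin L)).image (fun j => fun i => r w (i, j)) := by
      intro m hm
      simp only [Finset.mem_filter, Finset.mem_univ, true_and] at hm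
      obtain ⟨j, hj⟩ := hm
      exact Finset.mem_image.2 ⟨j, Finset.mem_univ _, funext hj⟩
    have := (Finset.card_le_card hs).trans Finset.card_image_le
    simp only [Finset.card_univ, Fintype.card_fin] at this
    exact_mod_cast this
  refine (Finset.sum_le_sum (fun w _ => h2 w)).trans ?_
  simp [mul_comm]

/-- Claim 5.8: from a deterministic decoder that succeeds on typical messages and restrictions
one obtains an OR of `2^a` many `q`-CNFs (with `a = ⌈log₂ L⌉ + 100`) that is rarely one on
uniform inputs, yet after a random restriction is non-negligibly often one on `1/3`-biased
inputs. -/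
theorem deterministic_decoder_to_depth3_circuit (ℓ n L q pn a : ℕ) (p : ℝ)
    (Enc : (Fin (2 ^ ℓ) → Bool) → (Fin n → Bool))
    (hp : 0 < p) (hp1 : p ≤ 1)
    (hpn : (pn : ℝ) = p * (n : ℝ))
    (ha : a = Nat.clog 2 L + 100)
    (Dbar : OracleProc q (Fin (2 ^ ℓ) × Fin L) (Fin n))
    (hDbar : uPr (fun mr : (Fin (2 ^ ℓ) → Bool) × Restr n pn =>
        bPr (1 / 3) (fun z : Fin pn → Bool =>
            ∃ j : Fin L, ∀ i : Fin (2 ^ ℓ),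
              OracleProc.run Dbar
                (fun s => xor (Enc mr.1 s) (Fill mr.2.1 mr.2.2 z s)) (i, j) =
                mr.1 i) ≥ 0.01) ≥ 0.51) :
    ∃ C : (Fin a → Bool) → BCNF n,
      (∀ α, BCNF.width (C α) q) ∧
      uPr (fun x : Fin n → Bool => ∃ α, BCNF.eval (C α) x = true) ≤
          (2 : ℝ) ^ (-((2 : ℝ) ^ (ℓ : ℕ) - (a : ℝ))) ∧
      uPr (fun ρ : Restr n pn =>
          bPr (1 / 3) (fun z : Fin pn → Bool =>
              ∃ α, BCNF.eval (C α) (Fill ρ.1 ρ.2 z) = true) ≥ 0.01) ≥ 0.01 := by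
  
  generalize hk : 2 ^ ℓ = k at *
  have hpow : (2 : ℝ) ^ (-((2 : ℝ) ^ (ℓ : ℕ) - (a : ℝ))) = (2 : ℝ) ^ a / (2 : ℝ) ^ k := by
    have : ((2 : ℝ) ^ (ℓ : ℕ)) = (k : ℝ) := by rw [← hk]; push_cast; rfl
    rw [this, neg_sub, Real.rpow_sub (by norm_num), Real.rpow_natCast, Real.rpow_natCast]
  rw [hpow]
  have hLc : L ≤ 2 ^ Nat.clog 2 L := Nat.le_pow_clog (by norm_num) L
  have hLa : (L : ℝ) * 2 ^ 100 ≤ 2 ^ a := by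
    rw [ha, pow_add]
    have : (L : ℝ) ≤ 2 ^ Nat.clog 2 L := by exact_mod_cast hLc
    exact mul_le_mul_of_nonneg_right this (by positivity)
  have hLa' : L ≤ 2 ^ a :=
    hLc.trans (Nat.pow_le_pow_right (by norm_num) (by omega))
  rw [aux_uPr_prod] at hDbar
  have hsum := aux_sum Enc (fun D w => Dbar.run D w)
  set f : (Fin k → Bool) → ℝ := fun m => uPr (fun y : Restr n pn =>
        bPr (1 / 3) (fun z : Fin pn → Bool =>
            ∃ j : Fin L, ∀ i : Fin k,
              OracleProc.run Dbar
                (fun s => xor (Enc m s) (Fill y.1 y.2 z s)) (i, j) = m i) ≥ 0.01) with hf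
  set g : (Fin k → Bool) → ℝ := fun m => uPr (fun x : Fin n → Bool =>
      ∃ j : Fin L, ∀ i, Dbar.run (fun s => xor (Enc m s) (x s)) (i, j) = m i) with hg
  have hcard : (Fintype.card (Fin k → Bool) : ℝ) = 2 ^ k := by simp
  have hD : (0.51 : ℝ) * 2 ^ k ≤ ∑ m, f m := by
    rw [hcard] at hDbar
    exact (le_div_iff₀ (by positivity)).1 hDbar
  have hgs : ∑ m, g m ≤ L := hsum
  have hex : ∃ m, g m ≤ 2 ^ a / 2 ^ k ∧ 0.01 ≤ f m := by
    by_contra hno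
    push Not at hno
    have hb : ∀ m, f m ≤ 0.01 + g m * (2 ^ k / 2 ^ a) := by
      intro m
      have hg0 : 0 ≤ g m := aux_uPr_nonneg _
      have hf1 : f m ≤ 1 := aux_uPr_le_one _
      by_cases h : g m ≤ 2 ^ a / 2 ^ k
      · have := hno m h
        have : 0 ≤ g m * (2 ^ k / 2 ^ a : ℝ) := by positivity
        linarith
      · push Not at h
        have : (2 ^ a / 2 ^ k : ℝ) * (2 ^ k / 2 ^ a) ≤ g m * (2 ^ k / 2 ^ a) :=
          mul_le_mul_of_nonneg_right h.le (by positivity)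
        have h1 : (2 ^ a / 2 ^ k : ℝ) * (2 ^ k / 2 ^ a) = 1 := by field_simp
        linarith
    have hs := Finset.sum_le_sum (fun m (_ : m ∈ Finset.univ) => hb m)
    rw [Finset.sum_add_distrib, ← Finset.sum_mul, Finset.sum_const, nsmul_eq_mul,
      Finset.card_univ, hcard] at hs
    have h3 : (∑ m, g m) * (2 ^ k / 2 ^ a) ≤ L * (2 ^ k / 2 ^ a : ℝ) :=
      mul_le_mul_of_nonneg_right hgs (by positivity)
    have h4 : (L : ℝ) * (2 ^ k / 2 ^ a : ℝ) ≤ 2 ^ k * (1 / 2 ^ 100) := by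
      rw [← mul_div_assoc, div_le_iff₀ (by positivity)]
      have : (2 : ℝ) ^ k * (1 / 2 ^ 100) * (L * 2 ^ 100) ≤ 2 ^ k * (1 / 2 ^ 100) * 2 ^ a :=
        mul_le_mul_of_nonneg_left hLa (by positivity)
      refine le_trans (le_of_eq ?_) this
      field_simp
    have h5 : (0 : ℝ) < 2 ^ k := by positivity
    norm_num at h4 hs hD
    linarith
  obtain ⟨m, hm1, hm2⟩ := hex
  obtain ⟨C, hC1, hC2⟩ := aux_exists hLa' (fun j => auxCNF (Enc m) Dbar m j) q
    (fun j => aux_width _ _ _ _)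
  simp only [aux_cnf] at hC2
  refine ⟨C, hC1, ?_, ?_⟩
  · simp only [hC2]
    exact hm1
  · simp only [hC2]
    exact hm2
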